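/- Let d ≥ 3 and consider simple random walk on Z^d with Green function bounds g(x,y) ≤ C_g(‖x−y‖+1)^{2−d}. Fix L_0 ≥ 1, L_k = L_0 l^k, and an embedding 𝒯 ∈ Λ_n of the dyadic tree. For x' ∈ 𝒯(T_{(n)}) let C_{x'} = ∂_int B(x', L_0) and set C_𝒯 = ∪_{x'} C_{x'}, D_𝒯 = ∪_{x'} ∂_int B(x', L_1/4). Then there is a constant C(d) such that for all l ≥ C(d), sup_{y ∈ D_𝒯} P_y[H_{C_𝒯} < ∞] ≤ 1/(2e). -/

import Mathlib

open MeasureTheory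
open scoped ENNReal

/-- ℓ∞ norm on `ℤ^d`. -/
def linf {d : ℕ} (x : Fin d → ℤ) : ℕ := Finset.univ.sup fun i => (x i).natAbs

/-- ℓ¹ norm on `ℤ^d`. -/
def lone {d : ℕ} (x : Fin d → ℤ) : ℕ := ∑ i, (x i).natAbs

/-- `P` is the family of laws (on path space) of the simple random walk on `ℤ^d`. -/
def IsSRW {d : ℕ} (P : (Fin d → ℤ) → Measure (ℕ → Fin d → ℤ)) : Prop :=
  (∀ x, IsProbabilityMeasure (P x)) ∧
  ∀ (x : Fin d → ℤ) (n : ℕ) (ρ : ℕ → Fin d → ℤ),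
    P x {w | ∀ i ≤ n, w i = ρ i} =
      if ρ 0 = x ∧ ∀ i < n, lone (ρ (i + 1) - ρ i) = 1 then ((2 * d : ℝ≥0∞))⁻¹ ^ n else 0

/-- The ℓ∞ ball of radius `r` around `x`. -/
def ballZ {d : ℕ} (x : Fin d → ℤ) (r : ℕ) : Set (Fin d → ℤ) := {y | linf (y - x) ≤ r}

/-- Interior boundary of a set in `ℤ^d`. -/
def intBdry {d : ℕ} (A : Set (Fin d → ℤ)) : Set (Fin d → ℤ) :=
  {y ∈ A | ∃ y', lone (y' - y) = 1 ∧ y' ∉ A}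

/-- Vertices of the dyadic tree of depth `n`. -/
def TreeVert (n : ℕ) := {l : List (Fin 2) // l.length ≤ n}

/-- The set `Λ_n` of dyadic-tree embeddings at scales `L_j = L₀ l^j`. -/
def Lam (d n L₀ l : ℕ) : Set (TreeVert n → (Fin d → ℤ)) :=
  {T | T ⟨[], by simp⟩ = 0 ∧
    (∀ m : TreeVert n, ∀ i : Fin d,
      ((L₀ * l ^ (n - m.1.length) : ℕ) : ℤ) ∣ T m i) ∧
    ∀ (m : TreeVert n) (hm : m.1.length < n) (i : Fin 2),
      linf (T ⟨m.1 ++ [i], by simpa using hm⟩ - T m)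
        = (i.1 + 1) * (L₀ * l ^ (n - m.1.length))}


lemma poly_ineq (u : ℝ) (h1 : -(1/10) ≤ u) (h2 : u ≤ 1/10) :
    1 ≤ (1 + u) * (1 - u/4 + 3*u^2/16)^4 := by
  have h3 : u^2 ≤ 1/100 := by nlinarith
  have hA : 1 - u/2 + (7/16)*u^2 - (3/32) * u^3 ≤ (1 - u/4 + 3*u^2/16)^2 := by
    nlinarith [sq_nonneg (u^2)]
  have hB0 : 0 ≤ 1 - u/2 + (7/16)*u^2 - (3/32) * u^3 := by nlinarith
  have hB : (1 - u/2 + (7/16)*u^2 - (3/32) * u^3)^2 ≤ (1 - u/4 + 3*u^2/16)^4 := by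
    calc _ ≤ ((1 - u/4 + 3*u^2/16)^2)^2 := by gcongr
      _ = _ := by ring
  have hC : 1 ≤ (1+u) * (1 - u/2 + (7/16)*u^2 - (3/32) * u^3)^2 := by
    nlinarith [sq_nonneg u, sq_nonneg (u^2), sq_nonneg (u^3), mul_nonneg (sq_nonneg u) (sub_nonneg.2 h2), mul_nonneg (sq_nonneg u) (sub_nonneg.2 h1), mul_nonneg (sq_nonneg (u^2)) (sub_nonneg.2 h2), mul_nonneg (sq_nonneg (u^2)) (sub_nonneg.2 h1), mul_nonneg (sq_nonneg (u^3)) (sub_nonneg.2 h2), mul_nonneg (sq_nonneg (u^3)) (sub_nonneg.2 h1)]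
  calc 1 ≤ _ := hC
    _ ≤ _ := by
      apply mul_le_mul_of_nonneg_left hB; linarith

lemma quart_ineq (s u : ℝ) (hs : 0 < s) (h1 : -(1/10) ≤ u) (h2 : u ≤ 1/10) :
    (√√(s * (1+u)))⁻¹ ≤ (√√s)⁻¹ * (1 - u/4 + 3*u^2/16) := by
  have hq : 0 < 1 - u/4 + 3*u^2/16 := by nlinarith
  have hu : 0 < 1 + u := by linarith
  rw [Real.sqrt_mul hs.le, Real.sqrt_mul (Real.sqrt_nonneg _), mul_inv]
  apply mul_le_mul_of_nonneg_left _ (by positivity)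
  have h : 1 ≤ √√(1+u) * (1 - u/4 + 3*u^2/16) := by
    have e : √√(1+u) * (1 - u/4 + 3*u^2/16) = √√((1 + u) * (1 - u/4 + 3*u^2/16)^4) := by
      rw [Real.sqrt_mul hu.le, Real.sqrt_mul (Real.sqrt_nonneg _),
        show (1 - u/4 + 3*u^2/16)^4 = ((1 - u/4 + 3*u^2/16)^2)^2 by ring,
        Real.sqrt_sq (by positivity), Real.sqrt_sq hq.le]
    rw [e, Real.one_le_sqrt, Real.one_le_sqrt]
    exact poly_ineq u h1 h2
  have : 0 < √√(1+u) := by positivity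
  rw [inv_le_iff_one_le_mul₀ this]
  linarith

/-- squared Euclidean norm, shifted -/
noncomputable def shiftSq {d : ℕ} (x : Fin d → ℤ) : ℝ := ∑ i, (x i : ℝ)^2 + 10000

lemma shiftSq_ge {d : ℕ} (x : Fin d → ℤ) : 10000 ≤ shiftSq x := by
  unfold shiftSq
  have : 0 ≤ ∑ i, (x i : ℝ)^2 := Finset.sum_nonneg fun i _ => sq_nonneg _
  linarith

lemma shiftSq_step {d : ℕ} (x : Fin d → ℤ) (i : Fin d) (e : ℤ) (he : e ^ 2 = 1) :
    shiftSq (x + Pi.single i e) = shiftSq x + (1 + 2 * e * x i) := by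
  unfold shiftSq
  have h : ∀ j, (((x + Pi.single i e : Fin d → ℤ) j : ℤ) : ℝ)^2
      = (x j : ℝ)^2 + (if j = i then (1 + 2 * e * x i : ℝ) else 0) := by
    intro j
    by_cases h : j = i
    · subst h
      have : (e:ℝ)^2 = 1 := by exact_mod_cast he
      simp; linear_combination this
    · simp [h]
  rw [Finset.sum_congr rfl fun j _ => h j, Finset.sum_add_distrib]
  simp; ring

lemma step_ineq {d : ℕ} (x : Fin d → ℤ) (i : Fin d) (e : ℤ) (he : e ^ 2 = 1) :
    (√√(shiftSq (x + Pi.single i e)))⁻¹ ≤ (√√(shiftSq x))⁻¹ *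
      (1 - ((1 + 2 * e * x i)/shiftSq x)/4 + 3*((1 + 2 * e * x i)/shiftSq x)^2/16) := by
  have hs := shiftSq_ge x
  have hs0 : 0 < shiftSq x := by linarith
  have hx : (x i : ℝ)^2 ≤ shiftSq x := by
    unfold shiftSq
    have := Finset.single_le_sum (f := fun i => (x i : ℝ)^2) (fun j _ => sq_nonneg _) (Finset.mem_univ i)
    beta_reduce at this
    linarith
  have heR : (e:ℝ)^2 = 1 := by exact_mod_cast he
  have hsq : (e * x i : ℝ)^2 ≤ shiftSq x := by rw [mul_pow, heR]; linarith
  have hb : |(e * x i : ℝ)| ≤ shiftSq x / 100 := by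
    apply abs_le_of_sq_le_sq _ (by positivity)
    nlinarith
  rw [abs_le] at hb
  have := quart_ineq (shiftSq x) ((1 + 2 * e * x i)/shiftSq x) hs0
    (by rw [le_div_iff₀ hs0]; nlinarith) (by rw [div_le_iff₀ hs0]; nlinarith)
  rw [shiftSq_step x i e he]
  convert this using 4
  field_simp

lemma superharm {d : ℕ} (hd : 3 ≤ d) (x : Fin d → ℤ) :
    ∑ i, ((√√(shiftSq (x + Pi.single i 1)))⁻¹ + (√√(shiftSq (x + Pi.single i (-1))))⁻¹)
      ≤ 2 * d * (√√(shiftSq x))⁻¹ := by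
  have hs := shiftSq_ge x
  have hs0 : 0 < shiftSq x := by linarith
  have h : ∀ i, ((√√(shiftSq (x + Pi.single i 1)))⁻¹ + (√√(shiftSq (x + Pi.single i (-1))))⁻¹)
      ≤ (√√(shiftSq x))⁻¹ * (2 - 1 / (2 * shiftSq x) + 3/8 / (shiftSq x)^2
          + (3/2) / (shiftSq x)^2 * (x i : ℝ)^2) := by
    intro i
    have h1 := step_ineq x i 1 (by norm_num)
    have h2 := step_ineq x i (-1) (by norm_num)
    refine (add_le_add h1 h2).trans (le_of_eq ?_)
    rw [← mul_add]
    congr 1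
    push_cast
    field_simp
    ring
  refine (Finset.sum_le_sum fun i _ => h i).trans ?_
  rw [← Finset.mul_sum, Finset.sum_add_distrib, ← Finset.mul_sum]
  have hS : ∑ i, (x i : ℝ)^2 = shiftSq x - 10000 := by unfold shiftSq; ring
  rw [hS, mul_comm]
  apply mul_le_mul_of_nonneg_right _ (by positivity)
  simp only [Finset.sum_const, Finset.card_univ, Fintype.card_fin, nsmul_eq_mul]
  have hdR : (3:ℝ) ≤ d := by exact_mod_cast hd
  have : d * (2 - 1 / (2 * shiftSq x) + 3/8 / (shiftSq x)^2)
          + (3/2) / (shiftSq x)^2 * (shiftSq x - 10000) - 2 * d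
      = - ((d * shiftSq x / 2 - 3 / 8 * d - 3/2 * (shiftSq x - 10000)) / (shiftSq x)^2) := by
    field_simp; ring
  have h3 : 0 ≤ (d * shiftSq x / 2 - 3 / 8 * d - 3/2 * (shiftSq x - 10000)) / (shiftSq x)^2 := by
    apply div_nonneg _ (by positivity)
    nlinarith
  linarith

lemma lone_one {d : ℕ} (v : Fin d → ℤ) (h : lone v = 1) :
    ∃ i, v = Pi.single i 1 ∨ v = Pi.single i (-1) := by
  unfold lone at h
  have : ∃ i, v i ≠ 0 := by
    by_contra! hh
    simp [hh] at h
  obtain ⟨i, hi⟩ := this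
  refine ⟨i, ?_⟩
  rw [← Finset.add_sum_erase _ _ (Finset.mem_univ i)] at h
  have h0 : ∑ x ∈ Finset.univ.erase i, (v x).natAbs = 0 := by omega
  rw [Finset.sum_eq_zero_iff] at h0
  have hv : v = Pi.single i (v i) := by
    ext j
    by_cases hj : j = i
    · subst hj; simp
    · have := h0 j (by simp [hj])
      simp [hj]; omega
  have : v i = 1 ∨ v i = -1 := by omega
  rcases this with h | h
  · left; rw [hv, h]
  · right; rw [hv, h]

def cyl {d : ℕ} (ρ : ℕ → Fin d → ℤ) (n : ℕ) : Set (ℕ → Fin d → ℤ) := {w | ∀ i ≤ n, w i = ρ i}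

lemma cyl_ext_le {d : ℕ} {P : (Fin d → ℤ) → Measure (ℕ → Fin d → ℤ)} (hP : IsSRW P)
    (x : Fin d → ℤ) (ρ : ℕ → Fin d → ℤ) (n : ℕ) (z : Fin d → ℤ) :
    P x (cyl (Function.update ρ (n+1) z) (n+1)) ≤ (2 * d : ℝ≥0∞)⁻¹ * P x (cyl ρ n) := by
  unfold cyl
  rw [hP.2, hP.2]
  split_ifs with h1 h2
  · rw [pow_succ, mul_comm]
  · exfalso; apply h2
    refine ⟨by simpa using h1.1, fun i hi => ?_⟩
    have := h1.2 i (by omega)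
    rwa [Function.update_of_ne (by omega), Function.update_of_ne (by omega)] at this
  · simp
  · simp

lemma cyl_ext_zero {d : ℕ} {P : (Fin d → ℤ) → Measure (ℕ → Fin d → ℤ)} (hP : IsSRW P)
    (x : Fin d → ℤ) (ρ : ℕ → Fin d → ℤ) (n : ℕ) (z : Fin d → ℤ) (hz : lone (z - ρ n) ≠ 1) :
    P x (cyl (Function.update ρ (n+1) z) (n+1)) = 0 := by
  unfold cyl
  rw [hP.2, if_neg]
  rintro ⟨-, h⟩
  have := h n (by omega)
  rw [Function.update_self, Function.update_of_ne (by omega)] at this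
  exact hz this

lemma hit_ind {d : ℕ} (hd : 1 ≤ d) {P : (Fin d → ℤ) → Measure (ℕ → Fin d → ℤ)} (hP : IsSRW P)
    (A : Set (Fin d → ℤ)) (F : (Fin d → ℤ) → ℝ≥0∞) (hA : ∀ z ∈ A, 1 ≤ F z)
    (hF : ∀ x, ∑ i, (F (x + Pi.single i 1) + F (x + Pi.single i (-1))) ≤ 2 * d * F x)
    (x : Fin d → ℤ) (m : ℕ) : ∀ (ρ : ℕ → Fin d → ℤ) (n : ℕ),
    P x (cyl ρ n ∩ {w | ∃ k, n ≤ k ∧ k ≤ n + m ∧ w k ∈ A}) ≤ P x (cyl ρ n) * F (ρ n) := by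
  have triv : ∀ (ρ : ℕ → Fin d → ℤ) (n : ℕ) (S : Set (ℕ → Fin d → ℤ)), ρ n ∈ A →
      P x (cyl ρ n ∩ S) ≤ P x (cyl ρ n) * F (ρ n) := by
    intro ρ n S h
    calc P x (cyl ρ n ∩ S) ≤ P x (cyl ρ n) * 1 := by
          rw [mul_one]; exact measure_mono Set.inter_subset_left
      _ ≤ _ := by gcongr; exact hA _ h
  induction m with
  | zero =>
    intro ρ n
    by_cases h : ρ n ∈ A
    · exact triv ρ n _ h
    · have : cyl ρ n ∩ {w | ∃ k, n ≤ k ∧ k ≤ n + 0 ∧ w k ∈ A} = ∅ := by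
        ext w
        simp only [Set.mem_inter_iff, Set.mem_ofPred_eq, Set.mem_empty_iff_false, iff_false]
        rintro ⟨hw, k, h1, h2, h3⟩
        obtain rfl : k = n := by omega
        exact h (hw k le_rfl ▸ h3)
      rw [this]; simp
  | succ m ih =>
    intro ρ n
    by_cases h : ρ n ∈ A
    · exact triv ρ n _ h
    set c : (Fin d → ℤ) → ℝ≥0∞ := fun z => P x (cyl (Function.update ρ (n+1) z) (n+1) ∩
      {w | ∃ k, n + 1 ≤ k ∧ k ≤ n + 1 + m ∧ w k ∈ A}) with hc
    have hsub : cyl ρ n ∩ {w | ∃ k, n ≤ k ∧ k ≤ n + (m+1) ∧ w k ∈ A} ⊆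
        (⋃ i : Fin d, ((cyl (Function.update ρ (n+1) (ρ n + Pi.single i 1)) (n+1) ∩
          {w | ∃ k, n + 1 ≤ k ∧ k ≤ n + 1 + m ∧ w k ∈ A}) ∪
          (cyl (Function.update ρ (n+1) (ρ n + Pi.single i (-1))) (n+1) ∩
          {w | ∃ k, n + 1 ≤ k ∧ k ≤ n + 1 + m ∧ w k ∈ A}))) ∪
        ⋃ z : {z : Fin d → ℤ // lone (z - ρ n) ≠ 1}, cyl (Function.update ρ (n+1) z.1) (n+1) := by
      rintro w ⟨hw, k, h1, h2, h3⟩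
      have hk : n ≠ k := by
        rintro rfl; exact h (hw n le_rfl ▸ h3)
      have hcyl : w ∈ cyl (Function.update ρ (n+1) (w (n+1))) (n+1) := by
        intro i hi
        by_cases h' : i = n+1
        · subst h'; simp
        · rw [Function.update_of_ne h']; exact hw i (by omega)
      by_cases hl : lone (w (n+1) - ρ n) = 1
      · left
        obtain ⟨i, hi⟩ := lone_one _ hl
        rw [Set.mem_iUnion]
        refine ⟨i, ?_⟩
        have hh : w ∈ {w : ℕ → Fin d → ℤ | ∃ k, n + 1 ≤ k ∧ k ≤ n + 1 + m ∧ w k ∈ A} :=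
          ⟨k, by omega, by omega, h3⟩
        rcases hi with hi | hi
        · left
          rw [← hi]
          exact ⟨by simpa using hcyl, hh⟩
        · right
          rw [← hi]
          exact ⟨by simpa using hcyl, hh⟩
      · right
        rw [Set.mem_iUnion]
        exact ⟨⟨_, hl⟩, hcyl⟩
    have hz : P x (⋃ z : {z : Fin d → ℤ // lone (z - ρ n) ≠ 1},
        cyl (Function.update ρ (n+1) z.1) (n+1)) = 0 := by
      rw [measure_iUnion_null_iff]
      exact fun z => cyl_ext_zero hP x ρ n z.1 z.2
    have hcb : ∀ z, c z ≤ (2 * d : ℝ≥0∞)⁻¹ * P x (cyl ρ n) * F z := by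
      intro z
      refine (ih _ _).trans ?_
      rw [Function.update_self]
      gcongr
      exact cyl_ext_le hP x ρ n z
    calc _ ≤ _ := measure_mono hsub
      _ ≤ _ := measure_union_le _ _
      _ ≤ ∑ i, (c (ρ n + Pi.single i 1) + c (ρ n + Pi.single i (-1))) + 0 := by
        rw [hz]
        gcongr
        refine (measure_iUnion_fintype_le _ _).trans ?_
        gcongr with i
        exact measure_union_le _ _
      _ ≤ ∑ i, ((2 * d : ℝ≥0∞)⁻¹ * P x (cyl ρ n) * F (ρ n + Pi.single i 1)
            + (2 * d : ℝ≥0∞)⁻¹ * P x (cyl ρ n) * F (ρ n + Pi.single i (-1))) := by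
        rw [add_zero]
        gcongr <;> exact hcb _
      _ = (2 * d : ℝ≥0∞)⁻¹ * P x (cyl ρ n) *
          ∑ i, (F (ρ n + Pi.single i 1) + F (ρ n + Pi.single i (-1))) := by
        rw [Finset.mul_sum]; simp_rw [mul_add]
      _ ≤ (2 * d : ℝ≥0∞)⁻¹ * P x (cyl ρ n) * (2 * d * F (ρ n)) := by
        gcongr; exact hF _
      _ = ((2 * d : ℝ≥0∞)⁻¹ * (2 * d)) * (P x (cyl ρ n) * F (ρ n)) := by ring
      _ = _ := by
        rw [ENNReal.inv_mul_cancel, one_mul]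
        · simp; omega
        · exact ENNReal.mul_ne_top (by simp) (by simp)

lemma hit_le {d : ℕ} (hd : 1 ≤ d) {P : (Fin d → ℤ) → Measure (ℕ → Fin d → ℤ)} (hP : IsSRW P)
    (A : Set (Fin d → ℤ)) (F : (Fin d → ℤ) → ℝ≥0∞) (hA : ∀ z ∈ A, 1 ≤ F z)
    (hF : ∀ x, ∑ i, (F (x + Pi.single i 1) + F (x + Pi.single i (-1))) ≤ 2 * d * F x)
    (x : Fin d → ℤ) : P x {w | ∃ k, w k ∈ A} ≤ F x := by
  have := hP.1 x
  have h0 : P x (⋃ z : {z : Fin d → ℤ // z ≠ x}, cyl (fun _ => z.1) 0) = 0 := by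
    rw [measure_iUnion_null_iff]
    intro z
    unfold cyl
    rw [hP.2, if_neg]
    exact fun h => z.2 h.1
  have hm : ∀ m : ℕ, P x {w | ∃ k, k ≤ m ∧ w k ∈ A} ≤ F x := by
    intro m
    have hsub : {w : ℕ → Fin d → ℤ | ∃ k, k ≤ m ∧ w k ∈ A} ⊆
        (cyl (fun _ => x) 0 ∩ {w | ∃ k, 0 ≤ k ∧ k ≤ 0 + m ∧ w k ∈ A}) ∪
        ⋃ z : {z : Fin d → ℤ // z ≠ x}, cyl (fun _ => z.1) 0 := by
      rintro w ⟨k, h1, h2⟩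
      by_cases h : w 0 = x
      · left
        refine ⟨?_, k, by omega, by omega, h2⟩
        intro i hi
        obtain rfl : i = 0 := by omega
        exact h
      · right
        rw [Set.mem_iUnion]
        refine ⟨⟨w 0, h⟩, ?_⟩
        intro i hi
        obtain rfl : i = 0 := by omega
        rfl
    calc _ ≤ _ := measure_mono hsub
      _ ≤ _ := measure_union_le _ _
      _ ≤ P x (cyl (fun _ => x) 0) * F x := by
        rw [h0, add_zero]
        exact hit_ind hd hP A F hA hF x m (fun _ => x) 0
      _ ≤ 1 * F x := by gcongr; exact prob_le_one
      _ = F x := one_mul _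
  have : {w : ℕ → Fin d → ℤ | ∃ k, w k ∈ A} = ⋃ m : ℕ, {w | ∃ k, k ≤ m ∧ w k ∈ A} := by
    ext w
    simp only [Set.mem_ofPred_eq, Set.mem_iUnion]
    exact ⟨fun ⟨k, hk⟩ => ⟨k, k, le_rfl, hk⟩, fun ⟨_, k, _, hk⟩ => ⟨k, hk⟩⟩
  rw [this, Monotone.measure_iUnion]
  · exact iSup_le hm
  · intro a b hab w ⟨k, hk, h⟩
    exact ⟨k, hk.trans hab, h⟩

lemma natAbs_le_linf {d : ℕ} (x : Fin d → ℤ) (i : Fin d) : (x i).natAbs ≤ linf x :=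
  Finset.le_sup (f := fun i => (x i).natAbs) (Finset.mem_univ i)

lemma linf_le {d : ℕ} (x : Fin d → ℤ) (r : ℕ) (h : ∀ i, (x i).natAbs ≤ r) : linf x ≤ r :=
  Finset.sup_le fun i _ => h i

lemma linf_tri {d : ℕ} (x y z : Fin d → ℤ) : linf (x - z) ≤ linf (x - y) + linf (y - z) := by
  apply linf_le
  intro i
  have h1 := natAbs_le_linf (x - y) i
  have h2 := natAbs_le_linf (y - z) i
  simp only [Pi.sub_apply] at *
  omega

lemma linf_comm {d : ℕ} (x y : Fin d → ℤ) : linf (x - y) = linf (y - x) := by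
  unfold linf
  congr 1
  ext i
  simp only [Pi.sub_apply]
  omega

lemma linf_le_lone {d : ℕ} (x : Fin d → ℤ) : linf x ≤ lone x :=
  linf_le _ _ fun i => Finset.single_le_sum (f := fun i => (x i).natAbs) (fun _ _ => Nat.zero_le _)
    (Finset.mem_univ i)

lemma intBdry_linf {d : ℕ} (x y : Fin d → ℤ) (r : ℕ) (h : y ∈ intBdry (ballZ x r)) :
    linf (y - x) = r := by
  obtain ⟨h1, y', h2, h3⟩ := h
  have h1 : linf (y - x) ≤ r := h1
  have h3 : ¬ linf (y' - x) ≤ r := h3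
  have := linf_tri y' y x
  have := linf_le_lone (y' - y)
  omega

lemma shiftSq_le {d : ℕ} (x : Fin d → ℤ) (r : ℕ) (h : linf x ≤ r) :
    shiftSq x ≤ d * (r:ℝ)^2 + 10000 := by
  unfold shiftSq
  have : ∑ i, (x i : ℝ)^2 ≤ ∑ i : Fin d, (r:ℝ)^2 := by
    apply Finset.sum_le_sum
    intro i _
    have h1 := (natAbs_le_linf x i).trans h
    rw [sq_le_sq, Nat.abs_cast, ← Int.cast_abs, ← Int.natCast_natAbs]
    exact_mod_cast h1
  simp at this
  linarith

lemma le_shiftSq {d : ℕ} (hd : 1 ≤ d) (x : Fin d → ℤ) : (linf x : ℝ)^2 ≤ shiftSq x := by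
  have : Nonempty (Fin d) := ⟨⟨0, hd⟩⟩
  obtain ⟨i, -, hi⟩ := Finset.exists_mem_eq_sup (Finset.univ : Finset (Fin d))
    Finset.univ_nonempty fun i => (x i).natAbs
  have hi : linf x = (x i).natAbs := hi
  have h2 : ((linf x : ℕ) : ℝ)^2 = (x i : ℝ)^2 := by
    rw [hi, Nat.cast_natAbs, Int.cast_abs, sq_abs]
  have := Finset.single_le_sum (f := fun i => (x i : ℝ)^2) (fun j _ => sq_nonneg _)
    (Finset.mem_univ i)
  beta_reduce at this
  rw [h2]
  unfold shiftSq
  linarith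

lemma ball_hit {d : ℕ} (hd : 3 ≤ d) {P : (Fin d → ℤ) → Measure (ℕ → Fin d → ℤ)} (hP : IsSRW P)
    (c y : Fin d → ℤ) (r : ℕ) :
    P y {w | ∃ k, w k ∈ ballZ c r} ≤
      ENNReal.ofReal (√√(d * (r:ℝ)^2 + 10000) * (√√(shiftSq (y - c)))⁻¹) := by
  refine hit_le (by omega) hP (ballZ c r)
    (fun y => ENNReal.ofReal (√√(d * (r:ℝ)^2 + 10000) * (√√(shiftSq (y - c)))⁻¹)) ?_ ?_ y
  · intro z hz
    rw [ENNReal.one_le_ofReal]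
    have hs := shiftSq_ge (z - c)
    have : 0 < √√(shiftSq (z - c)) := by
      apply Real.sqrt_pos.2; apply Real.sqrt_pos.2; linarith
    rw [← div_eq_mul_inv, one_le_div this]
    exact Real.sqrt_le_sqrt (Real.sqrt_le_sqrt (shiftSq_le _ _ hz))
  · intro x
    have h := superharm hd (x - c)
    have h' := mul_le_mul_of_nonneg_left h (Real.sqrt_nonneg (√(d * (r:ℝ)^2 + 10000)))
    have e : (2 * d : ℝ≥0∞) = ENNReal.ofReal (2 * d) := by
      rw [ENNReal.ofReal_mul (by norm_num)]; simp
    simp_rw [← ENNReal.ofReal_add (mul_nonneg (Real.sqrt_nonneg _) (inv_nonneg.2 (Real.sqrt_nonneg _))) (mul_nonneg (Real.sqrt_nonneg _) (inv_nonneg.2 (Real.sqrt_nonneg _)))]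
    rw [← ENNReal.ofReal_sum_of_nonneg (fun i _ => by positivity), e,
      ← ENNReal.ofReal_mul (by positivity)]
    apply ENNReal.ofReal_le_ofReal
    rw [Finset.mul_sum] at h'
    simp_rw [mul_add, sub_add_eq_add_sub] at h'
    linarith

lemma ball_hit' {d : ℕ} (hd : 3 ≤ d) {P : (Fin d → ℤ) → Measure (ℕ → Fin d → ℤ)} (hP : IsSRW P)
    (c y : Fin d → ℤ) (r l k : ℕ) (hr : 1 ≤ r) (hl : 1 ≤ l) (h : r * l ^ k ≤ 8 * linf (y - c)) :
    P y {w | ∃ k, w k ∈ ballZ c r} ≤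
      ENNReal.ofReal (√√(64 * (d + 10000))) * ENNReal.ofReal ((√l)⁻¹) ^ k := by
  refine (ball_hit hd hP c y r).trans ?_
  rw [← ENNReal.ofReal_pow (by positivity), ← ENNReal.ofReal_mul (by positivity)]
  apply ENNReal.ofReal_le_ofReal
  have hs := shiftSq_ge (y - c)
  have hs0 : 0 < shiftSq (y - c) := by linarith
  have hlR : (0:ℝ) < l := by exact_mod_cast hl
  have hrR : (1:ℝ) ≤ r := by exact_mod_cast hr
  have e : ((√l)⁻¹) ^ k = √√(((l:ℝ)^k)⁻¹^2) := by
    rw [Real.sqrt_sq (by positivity), Real.sqrt_inv, inv_pow]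
    congr 1
    symm
    rw [Real.sqrt_eq_iff_mul_self_eq (by positivity) (by positivity), ← mul_pow,
      Real.mul_self_sqrt hlR.le]
  rw [e, ← Real.sqrt_inv, ← Real.sqrt_inv, ← Real.sqrt_mul (by positivity),
    ← Real.sqrt_mul (by positivity), ← Real.sqrt_mul (by positivity),
    ← Real.sqrt_mul (by positivity)]
  apply Real.sqrt_le_sqrt
  apply Real.sqrt_le_sqrt
  have h1 := le_shiftSq (by omega) (y - c)
  have h2 : (r:ℝ) * l ^ k ≤ 8 * linf (y - c) := by exact_mod_cast h
  have h3 : ((r:ℝ) * l ^ k)^2 ≤ 64 * shiftSq (y - c) := by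
    calc _ ≤ (8 * (linf (y - c) : ℝ))^2 := by gcongr
      _ = 64 * (linf (y - c) : ℝ)^2 := by ring
      _ ≤ _ := by gcongr
  rw [← div_eq_mul_inv, inv_pow, ← div_eq_mul_inv, div_le_div_iff₀ hs0 (by positivity)]
  have h4 : (d:ℝ) * r^2 + 10000 ≤ (d + 10000) * r^2 := by nlinarith
  calc _ ≤ (d + 10000) * (r:ℝ)^2 * ((l:ℝ)^k)^2 := by gcongr
    _ = (d + 10000) * ((r:ℝ) * l ^ k)^2 := by ring
    _ ≤ (d + 10000) * (64 * shiftSq (y - c)) := by gcongr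
    _ = _ := by ring

/-- The union of `U m` over leaves `m` below `q`. -/
def below {Ω : Type*} (U : List (Fin 2) → Set Ω) (n : ℕ) (q : List (Fin 2)) : Set Ω :=
  {w | ∃ m : List (Fin 2), m.length = n ∧ q <+: m ∧ w ∈ U m}

lemma prefix_next {q m : List (Fin 2)} (h : q <+: m) (hl : q.length < m.length) :
    ∃ c, q ++ [c] <+: m := by
  obtain ⟨t, rfl⟩ := h
  cases t with
  | nil => simp at hl
  | cons c t => exact ⟨c, t, by simp⟩

lemma below_zero {Ω : Type*} (U : List (Fin 2) → Set Ω) (n : ℕ) (q : List (Fin 2))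
    (h : q.length = n) : below U n q ⊆ U q := by
  rintro w ⟨m, h1, h2, h3⟩
  rwa [h2.eq_of_length (by omega)]

lemma below_succ {Ω : Type*} (U : List (Fin 2) → Set Ω) (n : ℕ) (q : List (Fin 2))
    (h : q.length < n) (a b : Fin 2) (hab : a ≠ b) :
    below U n q ⊆ below U n (q ++ [a]) ∪ below U n (q ++ [b]) := by
  rintro w ⟨m, h1, h2, h3⟩
  obtain ⟨c, hc⟩ := prefix_next h2 (by omega)
  have : c = a ∨ c = b := by omega
  rcases this with rfl | rfl
  · left; exact ⟨m, h1, hc, h3⟩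
  · right; exact ⟨m, h1, hc, h3⟩

lemma below_crude {Ω : Type*} [MeasurableSpace Ω] (μ : Measure Ω) (U : List (Fin 2) → Set Ω)
    (n : ℕ) (b : ℝ≥0∞) (j : ℕ) : ∀ q : List (Fin 2), q.length + j = n →
    (∀ m, m.length = n → q <+: m → μ (U m) ≤ b) → μ (below U n q) ≤ 2 ^ j * b := by
  induction j with
  | zero =>
    intro q hq h
    simpa using (measure_mono (below_zero U n q hq)).trans (h q hq List.prefix_rfl)
  | succ j ih =>
    intro q hq h
    have hh : ∀ c : Fin 2, μ (below U n (q ++ [c])) ≤ 2 ^ j * b := fun c =>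
      ih (q ++ [c]) (by simp; omega) fun m h1 h2 => h m h1 ((List.prefix_append _ _).trans h2)
    calc _ ≤ _ := measure_mono (below_succ U n q (by omega) 0 1 (by decide))
      _ ≤ _ := measure_union_le _ _
      _ ≤ 2 ^ j * b + 2 ^ j * b := add_le_add (hh 0) (hh 1)
      _ = _ := by ring

lemma below_bound {Ω : Type*} [MeasurableSpace Ω] (μ : Measure Ω) (U : List (Fin 2) → Set Ω)
    (n : ℕ) (β θ : ℝ≥0∞) (m₀ : List (Fin 2)) (hm₀ : m₀.length = n) (h0 : μ (U m₀) ≤ β * θ)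
    (hU : ∀ (j : ℕ) (p m : List (Fin 2)) (a b : Fin 2), a ≠ b → p.length + (j + 1) = n →
      m.length = n → p ++ [a] <+: m₀ → p ++ [b] <+: m → μ (U m) ≤ β * θ ^ (j + 1))
    (j : ℕ) : ∀ p : List (Fin 2), p.length + j = n → p <+: m₀ →
      μ (below U n p) ≤ β * θ * (1 + ∑ k ∈ Finset.range j, (2 * θ) ^ k) := by
  induction j with
  | zero =>
    intro p hp hpm
    obtain rfl := hpm.eq_of_length (by omega)
    simpa using (measure_mono (below_zero U n p hp)).trans h0
  | succ j ih =>
    intro p hp hpm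
    obtain ⟨a, ha⟩ := prefix_next hpm (by omega)
    obtain ⟨b, hb⟩ : ∃ b : Fin 2, a ≠ b := ⟨1 - a, by omega⟩
    have h1 := ih (p ++ [a]) (by simp; omega) ha
    have h2 := below_crude μ U n (β * θ ^ (j+1)) j (p ++ [b]) (by simp; omega)
      fun m hm hmp => hU j p m a b hb hp hm ha hmp
    calc _ ≤ _ := measure_mono (below_succ U n p (by omega) a b hb)
      _ ≤ _ := measure_union_le _ _
      _ ≤ _ := add_le_add h1 h2
      _ = _ := by rw [Finset.sum_range_succ]; ring

/-- Extension of an embedding to all lists. -/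
def extT {d n : ℕ} (T : TreeVert n → (Fin d → ℤ)) (q : List (Fin 2)) : Fin d → ℤ :=
  if h : q.length ≤ n then T ⟨q, h⟩ else 0

lemma extT_step {d n L₀ l : ℕ} {T : TreeVert n → (Fin d → ℤ)} (hT : T ∈ Lam d n L₀ l)
    (q : List (Fin 2)) (j : ℕ) (hq : q.length + j = n) (hj : 1 ≤ j) (i : Fin 2) :
    linf (extT T (q ++ [i]) - extT T q) = (i.1 + 1) * (L₀ * l ^ j) := by
  have h := hT.2.2 ⟨q, by omega⟩ (by show q.length < n; omega) i
  have e : n - q.length = j := by omega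
  unfold extT
  rw [dif_pos (by simp; omega), dif_pos (by omega)]
  simpa [e] using h

lemma extT_leaf {d n L₀ l : ℕ} (hl : 2 ≤ l) {T : TreeVert n → (Fin d → ℤ)}
    (hT : T ∈ Lam d n L₀ l) (m : List (Fin 2)) (hm : m.length = n) (j : ℕ) :
    ∀ q : List (Fin 2), q.length + j = n → q <+: m →
      linf (extT T m - extT T q) ≤ 4 * (L₀ * l ^ j) := by
  induction j with
  | zero =>
    intro q hq hqm
    obtain rfl := hqm.eq_of_length (by omega)
    have : linf (extT T q - extT T q) ≤ 0 := linf_le _ _ fun i => by simp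
    omega
  | succ j ih =>
    intro q hq hqm
    obtain ⟨c, hc⟩ := prefix_next hqm (by omega)
    have h1 := ih (q ++ [c]) (by simp; omega) hc
    have h2 := extT_step hT q (j+1) hq (by omega) c
    have h3 := linf_tri (extT T m) (extT T (q ++ [c])) (extT T q)
    have h4 : (c.1 + 1) * (L₀ * l ^ (j+1)) ≤ 2 * (L₀ * l ^ (j+1)) := by
      gcongr; omega
    have h5 : 2 * (L₀ * l ^ j) ≤ L₀ * l ^ (j+1) := by
      calc 2 * (L₀ * l ^ j) ≤ l * (L₀ * l ^ j) := by gcongr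
        _ = _ := by ring
    omega

lemma extT_sep {d n L₀ l : ℕ} (hl : 2 ≤ l) {T : TreeVert n → (Fin d → ℤ)}
    (hT : T ∈ Lam d n L₀ l) (m m₀ p : List (Fin 2)) (hm : m.length = n) (hm₀ : m₀.length = n)
    (j : ℕ) (a b : Fin 2) (hab : a ≠ b) (hp : p.length + (j + 1) = n) (ha : p ++ [a] <+: m₀)
    (hb : p ++ [b] <+: m) :
    L₀ * l ^ (j + 1) ≤ linf (extT T m - extT T m₀) + 8 * (L₀ * l ^ j) := by
  have a1 := extT_leaf hl hT m₀ hm₀ j (p ++ [a]) (by simp; omega) ha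
  have b1 := extT_leaf hl hT m hm j (p ++ [b]) (by simp; omega) hb
  have a2 := extT_step hT p (j+1) hp (by omega) a
  have b2 := extT_step hT p (j+1) hp (by omega) b
  have t1 := linf_tri (extT T (p ++ [a])) (extT T (p ++ [b])) (extT T p)
  have t2 := linf_tri (extT T (p ++ [b])) (extT T (p ++ [a])) (extT T p)
  have c1 := linf_comm (extT T (p ++ [a])) (extT T (p ++ [b]))
  have t3 := linf_tri (extT T (p ++ [b])) (extT T m) (extT T (p ++ [a]))
  have t4 := linf_tri (extT T m) (extT T m₀) (extT T (p ++ [a]))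
  have c2 := linf_comm (extT T (p ++ [b])) (extT T m)
  have : (a = 0 ∧ b = 1) ∨ (a = 1 ∧ b = 0) := by omega
  rcases this with ⟨rfl, rfl⟩ | ⟨rfl, rfl⟩ <;> simp at a2 b2 <;> omega

/-- For every leaf `x' ∈ 𝒯(T_{(n)})` put `C_{x'} = ∂_int B(x', L₀)` and take the unions
`C_𝒯 = ∪ C_{x'}`, `D_𝒯 = ∪ ∂_int B(x', L₁/4)`; then for all `l` at least a dimension-dependent
constant, `sup_{y ∈ D_𝒯} P_y[H_{C_𝒯} < ∞] ≤ 1/(2e)`. -/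
theorem hitting_of_tree_cores (d : ℕ) (hd : 3 ≤ d) :
    ∃ C : ℕ, ∀ l : ℕ, C ≤ l → ∀ L₀ : ℕ, 1 ≤ L₀ → ∀ n : ℕ,
      ∀ T ∈ Lam d n L₀ l,
        ∀ P : (Fin d → ℤ) → Measure (ℕ → Fin d → ℤ), IsSRW P →
          ∀ y ∈ ⋃ (m : TreeVert n) (_ : m.1.length = n),
              intBdry (ballZ (T m) (L₀ * l / 4)),
            (P y {w | ∃ k : ℕ, w k ∈
                ⋃ (m : TreeVert n) (_ : m.1.length = n), intBdry (ballZ (T m) L₀)}).toReal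
              ≤ 1 / (2 * Real.exp 1) := by
  obtain ⟨C, hC⟩ := exists_nat_ge ((18 * √√(64 * ((d:ℝ) + 10000))) ^ 2)
  refine ⟨C + 64, ?_⟩
  intro l hl L₀ hL₀ n T hT P hP y hy
  have := hP.1 y
  simp only [Set.mem_iUnion] at hy
  obtain ⟨⟨m₀, hm₀'⟩, hm₀, hy⟩ := hy
  change m₀.length = n at hm₀
  have hy := intBdry_linf _ _ _ hy
  have hext : ∀ (m : List (Fin 2)) (h : m.length ≤ n), T ⟨m, h⟩ = extT T m := by
    intro m h
    unfold extT
    rw [dif_pos h]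
  rw [hext] at hy
  set K : ℝ := √√(64 * ((d:ℝ) + 10000)) with hK
  set U : List (Fin 2) → Set (ℕ → Fin d → ℤ) :=
    fun m => {w | ∃ k, w k ∈ ballZ (extT T m) L₀} with hU
  have hLl : 64 * L₀ ≤ L₀ * l := by nlinarith
  have hlR : (64:ℝ) ≤ l := by exact_mod_cast (show 64 ≤ l by omega)
  have hmain := below_bound (P y) U n (ENNReal.ofReal K) (ENNReal.ofReal ((√l)⁻¹)) m₀ hm₀
    (by
      have := ball_hit' hd hP (extT T m₀) y L₀ l 1 hL₀ (by omega) (by rw [hy, pow_one]; omega)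
      rwa [pow_one] at this)
    (by
      intro j p m a b hab hp hm ha hb
      apply ball_hit' hd hP (extT T m) y L₀ l (j+1) hL₀ (by omega)
      have h1 := extT_sep (by omega) hT m m₀ p hm hm₀ j a b hab hp ha hb
      have h2 := linf_tri (extT T m) y (extT T m₀)
      have h3 := linf_comm (extT T m) y
      have h4 : 64 * (L₀ * l ^ j) ≤ L₀ * l ^ (j+1) := by
        calc _ ≤ l * (L₀ * l ^ j) := by gcongr; omega
          _ = _ := by ring
      have h5 : L₀ * l ≤ L₀ * l ^ (j+1) := by
        gcongr
        exact Nat.le_self_pow (by omega) l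
      omega)
    n [] (by simp) (List.nil_prefix)
  have hθ : (√l)⁻¹ ≤ (1:ℝ)/8 := by
    rw [one_div]
    apply inv_anti₀ (by norm_num)
    apply Real.le_sqrt_of_sq_le
    linarith
  have hgeo : ∑ k ∈ Finset.range n, (2 * ENNReal.ofReal ((√l)⁻¹)) ^ k ≤ 2 := by
    calc _ ≤ ∑ k ∈ Finset.range n, ((2:ℝ≥0∞)⁻¹) ^ k := by
          gcongr
          rw [show (2:ℝ≥0∞) = ENNReal.ofReal 2 by simp, ← ENNReal.ofReal_mul (by norm_num),
            ← ENNReal.ofReal_inv_of_pos (by norm_num)]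
          apply ENNReal.ofReal_le_ofReal
          linarith
      _ ≤ ∑' k, ((2:ℝ≥0∞)⁻¹) ^ k := ENNReal.sum_le_tsum _
      _ = 2 := by rw [ENNReal.tsum_geometric, ENNReal.one_sub_inv_two, inv_inv]
  have hsub : {w : ℕ → Fin d → ℤ | ∃ k : ℕ, w k ∈
      ⋃ (m : TreeVert n) (_ : m.1.length = n), intBdry (ballZ (T m) L₀)} ⊆ below U n [] := by
    rintro w ⟨k, hk⟩
    simp only [Set.mem_iUnion] at hk
    obtain ⟨⟨m, hm'⟩, hm, hk⟩ := hk
    rw [hext] at hk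
    exact ⟨m, hm, List.nil_prefix, k, hk.1⟩
  have hfin : P y {w : ℕ → Fin d → ℤ | ∃ k : ℕ, w k ∈
      ⋃ (m : TreeVert n) (_ : m.1.length = n), intBdry (ballZ (T m) L₀)} ≤
      ENNReal.ofReal (K * (√l)⁻¹ * 3) := by
    calc _ ≤ _ := measure_mono hsub
      _ ≤ _ := hmain
      _ ≤ ENNReal.ofReal K * ENNReal.ofReal ((√l)⁻¹) * (1 + 2) := by gcongr
      _ = _ := by
        rw [ENNReal.ofReal_mul (by positivity), ENNReal.ofReal_mul (by positivity)]
        norm_num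
  refine (ENNReal.toReal_le_of_le_ofReal (by positivity) hfin).trans ?_
  have hs : 18 * K ≤ √l := by
    apply Real.le_sqrt_of_sq_le
    have : (C:ℝ) ≤ l := by exact_mod_cast (show C ≤ l by omega)
    linarith
  have hsp : 0 < √(l:ℝ) := Real.sqrt_pos.2 (by linarith)
  have h6 : K * (√l)⁻¹ * 3 ≤ 1 / 6 := by
    rw [← div_eq_mul_inv, div_mul_eq_mul_div, div_le_iff₀ hsp]
    linarith
  refine h6.trans ?_
  apply one_div_le_one_div_of_le (by positivity)
  have := Real.exp_one_lt_d9
  linarith
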